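/- Let R be a one-dimensional Cohen-Macaulay local ring and M a nonzero finitely generated torsion-free R-module with minimal multiplicity such that e_R(M) > 2μ_R(M). If N is a finitely generated R-module with Tor_i^R(M, N) = 0 for all i >> 0, then either N has finite projective dimension, or the Betti numbers of N satisfy β_{i+1}(N) > β_i(N) for all i >> 0. -/

import Mathlib

/-!
Let `k` be the residue field, `m` the maximal ideal and `x` the given reduction, which is
`M`-regular because a power of a non-zero-divisor of `m` is a multiple of `x`. Since
`m · mM = x · mM ⊆ xM`, the module `mM/xM` is a `k`-vector space, of dimension `a` say. In the
exact sequence `0 → mM/xM → M/xM → M/mM → 0` the outer terms are thus `k^a` and `k^μ(M)`, while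
`Tor_i(M/xM, N) = 0` for `i ≫ 0` because `xM ≅ M`. The connecting maps therefore give
`μ(M) β_(i+1)(N) = a β_i(N)` for `i ≫ 0` (`betti_recursion`).

Minimal multiplicity also makes every `m^n M` with `n ≥ 1` isomorphic to `mM`, so
`e(M) = μ(mM)` (`hsMult_eq`), and comparing two filtrations of `M/xmM` yields `e(M) = a + μ(M)`
(`mu_maximalIdeal_smul_eq`). Hence `e(M) > 2μ(M)` means `a > μ(M)`, and the Betti numbers
strictly increase unless one, and then every later one, vanishes.

`Tor` is derived in its second variable; the long exact sequence in the first variable comes from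
tensoring short exact sequences with a projective, hence flat, resolution of `N`. The minimal
number of generators used here is `0` on modules that are not finitely generated, so finiteness of
`Tor_i(k, N)` (`tensH_finite`) is needed to identify it with the dimension.
-/

open IsLocalRing Filter

section Defs

variable (R : Type*) [CommRing R]

/-- The length of an `R`-module `M`: the Krull dimension of its lattice of submodules. -/
noncomputable def mlen (M : Type*) [AddCommGroup M] [Module R M] : WithBot ℕ∞ :=
  Order.krullDim (Submodule R M)

/-- The minimal number of generators of an `R`-module. -/
noncomputable def mu (M : Type*) [AddCommGroup M] [Module R M] : ℕ :=
  sInf {n | ∃ s : Finset M, s.card = n ∧ Submodule.span R (s : Set M) = ⊤}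

/-- The Hilbert–Samuel multiplicity `e_R(I, M)` of a finitely generated module over a
one-dimensional local ring with respect to an `m`-primary ideal `I`: the eventual value of
`ℓ(M/I^{n+1}M) - ℓ(M/I^n M)`. -/
noncomputable def hsMult (I : Ideal R) (M : Type*) [AddCommGroup M] [Module R M] : ℕ∞ := by
  classical
  exact if h : ∃ e : ℕ∞, ∀ᶠ n in atTop,
      mlen R (M ⧸ (I ^ (n + 1) • (⊤ : Submodule R M))) =
        mlen R (M ⧸ (I ^ n • (⊤ : Submodule R M))) + (e : WithBot ℕ∞)
    then h.choose else 0

/-- The length of the subquotient `P/Q` for submodules `Q ⊆ P` of `M`. -/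
noncomputable def qlen {M : Type*} [AddCommGroup M] [Module R M]
    (P Q : Submodule R M) : WithBot ℕ∞ :=
  mlen R (↥P ⧸ Q.comap P.subtype)

/-- `(x)` is a minimal reduction of `I` (one-dimensional situation): a principal subideal with
`I^{n+1} = x I^n` for all large `n`. -/
def IsMinimalReduction (I : Ideal R) (x : R) : Prop :=
  x ∈ I ∧ ∃ N : ℕ, ∀ n ≥ N, I ^ (n + 1) = Ideal.span {x} * I ^ n

/-- A module is torsion-free if non zero-divisors of `R` act injectively. -/
def TorsionFree (M : Type*) [AddCommGroup M] [Module R M] : Prop :=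
  ∀ r ∈ nonZeroDivisors R, ∀ m : M, r • m = 0 → m = 0

/-- The embedding dimension of a local ring: the minimal number of generators of the
maximal ideal. -/
noncomputable def embdim (R : Type*) [CommRing R] [IsLocalRing R] : ℕ :=
  sInf {n | ∃ s : Finset R, s.card = n ∧ Ideal.span (s : Set R) = maximalIdeal R}

/-- A Noetherian local ring is regular iff its embedding dimension equals its Krull
dimension. -/
def IsRegularLocal (R : Type*) [CommRing R] [IsLocalRing R] : Prop :=
  ((embdim R : ℕ∞) : WithBot ℕ∞) = ringKrullDim R

/-- The colon `(J :_Q K)` of two `R`-submodules of an `R`-algebra `Q`. -/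
def colonQ {Q : Type*} [CommRing Q] [Algebra R Q] (J K : Submodule R Q) : Submodule R Q where
  carrier := {q | ∀ k ∈ K, q * k ∈ J}
  add_mem' := by
    intro a b ha hb k hk
    simpa [add_mul] using J.add_mem (ha k hk) (hb k hk)
  zero_mem' := by intro k hk; rw [zero_mul]; exact J.zero_mem
  smul_mem' := by
    intro c a ha k hk
    simpa [smul_mul_assoc] using J.smul_mem c (ha k hk)

end Defs

open CategoryTheory

universe u

/-! ### Lengths and numbers of generators -/

section Length
variable {R : Type u} [CommRing R]

lemma mlen_eq_length (M : Type*) [AddCommGroup M] [Module R M] :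
    mlen R M = (Module.length R M : WithBot ℕ∞) :=
  (Module.coe_length R M).symm

lemma length_add_quot {M : Type*} [AddCommGroup M] [Module R M] (Q : Submodule R M) :
    Module.length R M = Module.length R Q + Module.length R (M ⧸ Q) :=
  Module.length_eq_add_of_exact Q.subtype Q.mkQ Q.injective_subtype Q.mkQ_surjective
    (LinearMap.exact_subtype_mkQ Q)

lemma mu_eq_spanFinrank (M : Type*) [AddCommGroup M] [Module R M] :
    mu R M = (⊤ : Submodule R M).spanFinrank := by
  rw [Submodule.spanFinrank_eq_iInf, mu, iInf]
  congr 1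
  ext n
  constructor
  · rintro ⟨s, rfl, h⟩
    exact ⟨⟨s, h⟩, rfl⟩
  · rintro ⟨⟨s, h⟩, rfl⟩
    exact ⟨s, rfl, h⟩

variable [IsLocalRing R]

/-- A module killed by the maximal ideal and finitely generated is a finite power of `k`. -/
lemma exists_equiv_pi_residueField {X : Type*} [AddCommGroup X] [Module R X] [Module.Finite R X]
    (h : ∀ r ∈ maximalIdeal R, ∀ y : X, r • y = 0) :
    ∃ n : ℕ, Nonempty (X ≃ₗ[R] (Fin n → ResidueField R)) := by
  have ht : Module.IsTorsionBySet R X (maximalIdeal R : Set R) := fun y r => h r r.2 y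
  let _ : Module (ResidueField R) X := ht.module
  have : IsScalarTower R (ResidueField R) X := ht.isScalarTower
  have : Module.Finite (ResidueField R) X := Module.Finite.of_restrictScalars_finite R _ _
  exact ⟨_, ⟨(Module.finBasis (ResidueField R) X).equivFun.restrictScalars R⟩⟩

lemma length_residueField : Module.length R (ResidueField R) = 1 := by
  rw [Module.length_eq_of_surjective (S := R) (R := ResidueField R) residue_surjective]
  simp

/-- Nakayama's lemma: `μ(X) = ℓ(X/mX)`. -/
lemma mu_eq_length (X : Type*) [AddCommGroup X] [Module R X] [Module.Finite R X] :
    (mu R X : ℕ∞) = Module.length R (X ⧸ (maximalIdeal R • ⊤ : Submodule R X)) := by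
  have h1 : (mu R X : ℕ∞) = Module.length R
      ((⊤ : Submodule R X) ⧸ (maximalIdeal R • ⊤ : Submodule R (⊤ : Submodule R X))) := by
    rw [mu_eq_spanFinrank, IsLocalRing.spanFinrank_eq_finrank_quotient _ Module.Finite.fg_top]
    let _ : Field (R ⧸ maximalIdeal R) := Ideal.Quotient.field _
    have : Module.Finite (R ⧸ maximalIdeal R)
      ((⊤ : Submodule R X) ⧸ (maximalIdeal R • ⊤ : Submodule R (⊤ : Submodule R X))) :=
      Module.Finite.of_restrictScalars_finite R _ _
    exact (Module.length_eq_finrank (R ⧸ maximalIdeal R) _).symm.trans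
      (Module.length_eq_of_surjective (S := R) (R := R ⧸ maximalIdeal R)
        Ideal.Quotient.mk_surjective).symm
  rw [h1]
  refine (Submodule.Quotient.equiv _ _ Submodule.topEquiv ?_).length_eq
  rw [Submodule.map_smul'']
  simp

end Length

/-! ### Modules of minimal multiplicity -/

section MinimalMultiplicity
variable {R : Type u} [CommRing R]

lemma mu_congr {X Y : Type*} [AddCommGroup X] [Module R X] [AddCommGroup Y] [Module R Y]
    (e : X ≃ₗ[R] Y) : mu R X = mu R Y := by
  rw [mu_eq_spanFinrank, mu_eq_spanFinrank,
    ← Submodule.spanFinrank_map_eq_of_injective e.toLinearMap e.injective]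
  simp

section ThirdIso
variable {M : Type*} [AddCommGroup M] [Module R M] (P Q : Submodule R M)

/-- The inclusion `P/Q → M/Q` for `Q ≤ P` (without the hypothesis, `P/(P ∩ Q) → M/Q`). -/
def quotIncl : (P ⧸ Q.comap P.subtype) →ₗ[R] M ⧸ Q :=
  (Q.comap P.subtype).mapQ Q P.subtype le_rfl

lemma quotIncl_injective : Function.Injective (quotIncl P Q) := by
  rw [← LinearMap.ker_eq_bot, quotIncl, Submodule.ker_mapQ, Submodule.mkQ_map_self]

variable {P Q}

lemma quotIncl_exact (h : Q ≤ P) : Function.Exact (quotIncl P Q) (Submodule.factor h) := by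
  intro y
  obtain ⟨y, rfl⟩ := Submodule.Quotient.mk_surjective _ y
  constructor
  · intro hy
    have hy : y ∈ P := (Submodule.Quotient.mk_eq_zero P).1 hy
    exact ⟨Submodule.Quotient.mk ⟨y, hy⟩, rfl⟩
  · rintro ⟨z, hz⟩
    obtain ⟨z, rfl⟩ := Submodule.Quotient.mk_surjective _ z
    rw [← hz]
    exact (Submodule.Quotient.mk_eq_zero P).2 z.2

lemma length_quot_add (h : Q ≤ P) :
    Module.length R (M ⧸ Q) =
      Module.length R (P ⧸ Q.comap P.subtype) + Module.length R (M ⧸ P) :=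
  Module.length_eq_add_of_exact _ _ (quotIncl_injective P Q) (Submodule.factor_surjective h)
    (quotIncl_exact h)

end ThirdIso

variable {M : Type*} [AddCommGroup M] [Module R M]

/-- If `x` acts injectively, then `P ≅ xP`. -/
lemma exists_equiv_span_smul {x : R} (hx : ∀ y : M, x • y = 0 → y = 0) (P : Submodule R M) :
    Nonempty (P ≃ₗ[R] (Ideal.span {x} • P : Submodule R M)) := by
  have h : Function.Injective (LinearMap.lsmul R M x) :=
    (injective_iff_map_eq_zero _).2 hx
  rw [Submodule.ideal_span_singleton_smul]
  exact ⟨Submodule.equivMapOfInjective (LinearMap.lsmul R M x) h P⟩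

variable [IsLocalRing R]

lemma mu_eq_length_of_killed {X : Type*} [AddCommGroup X] [Module R X] [Module.Finite R X]
    (h : ∀ r ∈ maximalIdeal R, ∀ y : X, r • y = 0) : (mu R X : ℕ∞) = Module.length R X := by
  have h0 : (maximalIdeal R • ⊤ : Submodule R X) = ⊥ :=
    le_bot_iff.1 (Submodule.smul_le.2 fun r hr y _ => (Submodule.mem_bot R).2 (h r hr y))
  rw [mu_eq_length, h0]
  exact ((⊥ : Submodule R X).quotEquivOfEqBot rfl).length_eq

/-- For `P ≤ M`: `ℓ(M/mP) = μ(P) + ℓ(M/P)`. -/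
lemma length_quot_maximalIdeal_smul [IsNoetherianRing R] [Module.Finite R M]
    (P : Submodule R M) :
    Module.length R (M ⧸ (maximalIdeal R • P : Submodule R M)) =
      mu R P + Module.length R (M ⧸ P) := by
  rw [length_quot_add (Submodule.smul_le_right (I := maximalIdeal R) (N := P)), mu_eq_length]
  have h : (maximalIdeal R • P).comap P.subtype = (maximalIdeal R • ⊤ : Submodule R P) := by
    apply Submodule.map_injective_of_injective P.injective_subtype
    rw [Submodule.map_comap_subtype, Submodule.map_smul'', Submodule.map_subtype_top]
    exact inf_eq_right.2 Submodule.smul_le_right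
  rw [h]

/-- If `m` contains a non-zero-divisor `r`, then a reduction `x` of `m` divides a power of `r`,
hence is itself a non-zero-divisor. -/
lemma mem_nonZeroDivisors_of_reduction {x : R} (hx : IsMinimalReduction R (maximalIdeal R) x)
    (hCM : ∃ r ∈ maximalIdeal R, r ∈ nonZeroDivisors R) : x ∈ nonZeroDivisors R := by
  obtain ⟨-, n, hn⟩ := hx
  obtain ⟨r, hr, hr0⟩ := hCM
  have h1 : r ^ (n + 1) ∈ maximalIdeal R ^ (n + 1) := Ideal.pow_mem_pow hr _
  rw [hn n le_rfl] at h1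
  obtain ⟨y, -, hy⟩ := Ideal.mem_span_singleton_mul.1 h1
  have h2 := pow_mem hr0 (n + 1)
  rw [← hy] at h2
  exact (mul_mem_nonZeroDivisors.1 h2).1

/-- Minimal multiplicity gives `m^(n+2) M = x m^(n+1) M ≅ m^(n+1) M`, so all the modules
`m^(n+1) M` are isomorphic to `mM`. -/
lemma mu_pow_smul {x : R} (hx : ∀ y : M, x • y = 0 → y = 0)
    (hmm : (maximalIdeal R) ^ 2 • (⊤ : Submodule R M) =
        Ideal.span {x} • (maximalIdeal R • (⊤ : Submodule R M))) (n : ℕ) :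
    mu R (maximalIdeal R ^ (n + 1) • (⊤ : Submodule R M) : Submodule R M) =
      mu R (maximalIdeal R • (⊤ : Submodule R M) : Submodule R M) := by
  induction n with
  | zero => rw [zero_add, pow_one]
  | succ n ih =>
    have h : (maximalIdeal R ^ (n + 1 + 1) • (⊤ : Submodule R M) : Submodule R M) =
        Ideal.span {x} • (maximalIdeal R ^ (n + 1) • (⊤ : Submodule R M)) := by
      rw [add_assoc, pow_add, mul_smul, one_add_one_eq_two, hmm, pow_succ, ← mul_smul, ← mul_smul,
        ← mul_smul]
      congr 1
      ring
    obtain ⟨e⟩ := exists_equiv_span_smul hx (maximalIdeal R ^ (n + 1) • (⊤ : Submodule R M))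
    rw [← ih, h]
    exact (mu_congr e).symm

lemma length_quot_pow_ne_top [IsNoetherianRing R] [Module.Finite R M] (n : ℕ) :
    Module.length R (M ⧸ (maximalIdeal R ^ n • (⊤ : Submodule R M))) ≠ ⊤ := by
  induction n with
  | zero =>
    rw [pow_zero, Ideal.one_eq_top, Submodule.top_smul, Module.length_eq_zero]
    exact ENat.zero_ne_top
  | succ n ih =>
    rw [pow_succ', mul_smul, length_quot_maximalIdeal_smul]
    simp [ih]

/-- For `M` of minimal multiplicity, `e(M) = μ(mM)`. -/
lemma hsMult_eq [IsNoetherianRing R] [Module.Finite R M]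
    {x : R} (hx : ∀ y : M, x • y = 0 → y = 0)
    (hmm : (maximalIdeal R) ^ 2 • (⊤ : Submodule R M) =
        Ideal.span {x} • (maximalIdeal R • (⊤ : Submodule R M))) :
    hsMult R (maximalIdeal R) M =
      mu R (maximalIdeal R • (⊤ : Submodule R M) : Submodule R M) := by
  have key : ∀ n, Module.length R (M ⧸ (maximalIdeal R ^ (n + 1 + 1) • (⊤ : Submodule R M))) =
      Module.length R (M ⧸ (maximalIdeal R ^ (n + 1) • (⊤ : Submodule R M))) +
      mu R (maximalIdeal R • (⊤ : Submodule R M) : Submodule R M) := by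
    intro n
    rw [pow_succ' _ (n + 1), mul_smul, length_quot_maximalIdeal_smul, mu_pow_smul hx hmm, add_comm]
  have h : ∃ e : ℕ∞, ∀ᶠ n in atTop,
      mlen R (M ⧸ (maximalIdeal R ^ (n + 1) • (⊤ : Submodule R M))) =
        mlen R (M ⧸ (maximalIdeal R ^ n • (⊤ : Submodule R M))) + (e : WithBot ℕ∞) := by
    refine ⟨mu R (maximalIdeal R • (⊤ : Submodule R M) : Submodule R M), ?_⟩
    filter_upwards [eventually_ge_atTop 1] with n hn
    obtain ⟨n, rfl⟩ := Nat.exists_eq_add_of_le' hn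
    rw [mlen_eq_length, mlen_eq_length, key]
    rfl
  rw [hsMult, dif_pos h]
  obtain ⟨n, hn, hn1⟩ := (h.choose_spec.and (eventually_ge_atTop 1)).exists
  obtain ⟨n, rfl⟩ := Nat.exists_eq_add_of_le' hn1
  rw [mlen_eq_length, mlen_eq_length, key, ← WithBot.coe_add, WithBot.coe_inj] at hn
  exact (ENat.add_right_injective_of_ne_top (length_quot_pow_ne_top _) hn).symm

/-- `μ(mM) = ℓ(mM/xM) + μ(M)`, from computing `ℓ(M/xmM)` along both chains
`xmM ≤ mM ≤ M` and `xmM ≤ xM ≤ M`, using `xmM = m²M` and `xM ≅ M`. -/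
lemma mu_maximalIdeal_smul_eq [IsNoetherianRing R] [Module.Finite R M]
    {x : R} (hx : ∀ y : M, x • y = 0 → y = 0) (hxm : x ∈ maximalIdeal R)
    (hmm : (maximalIdeal R) ^ 2 • (⊤ : Submodule R M) =
        Ideal.span {x} • (maximalIdeal R • (⊤ : Submodule R M))) :
    (mu R (maximalIdeal R • (⊤ : Submodule R M) : Submodule R M) : ℕ∞) =
      Module.length R ((maximalIdeal R • (⊤ : Submodule R M) : Submodule R M) ⧸
        (Ideal.span {x} • (⊤ : Submodule R M)).comap
          (maximalIdeal R • (⊤ : Submodule R M)).subtype) + mu R M := by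
  have hle : Ideal.span {x} • (⊤ : Submodule R M) ≤ maximalIdeal R • (⊤ : Submodule R M) :=
    Submodule.smul_mono_left ((Ideal.span_singleton_le_iff_mem _).2 hxm)
  have h1 := length_quot_maximalIdeal_smul (maximalIdeal R • (⊤ : Submodule R M))
  have h2 := length_quot_maximalIdeal_smul (Ideal.span {x} • (⊤ : Submodule R M))
  obtain ⟨e⟩ := exists_equiv_span_smul hx (⊤ : Submodule R M)
  have h3 : (maximalIdeal R • (Ideal.span {x} • (⊤ : Submodule R M)) : Submodule R M) =
      maximalIdeal R • maximalIdeal R • (⊤ : Submodule R M) := by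
    rw [← mul_smul (maximalIdeal R) (maximalIdeal R), ← sq, hmm, ← mul_smul, ← mul_smul, mul_comm]
  rw [h3, h1, length_quot_add hle, ← mu_congr e, mu_congr Submodule.topEquiv, ← mu_eq_length,
    add_comm] at h2
  exact ENat.add_right_injective_of_ne_top (ENat.natCast_ne_top _) h2

end MinimalMultiplicity

/-! ### Tor as homology of a tensor product with a resolution -/

section TensorHomology
open MonoidalCategory
variable {R : Type u} [CommRing R]

/-- The functor `X ↦ X ⊗ P` from modules to complexes, for a fixed complex `P`. -/
noncomputable def tensC (P : ChainComplex (ModuleCat.{u} R) ℕ) :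
    ModuleCat.{u} R ⥤ ChainComplex (ModuleCat.{u} R) ℕ where
  obj X := (((tensoringLeft (ModuleCat.{u} R)).obj X).mapHomologicalComplex _).obj P
  map f := (NatTrans.mapHomologicalComplex ((tensoringLeft (ModuleCat.{u} R)).map f) _).app P
  map_id X := by ext; simp
  map_comp f g := by ext; simp

instance (P : ChainComplex (ModuleCat.{u} R) ℕ) : (tensC P).Additive where
  map_add {X Y f g} := by
    ext i : 1
    exact MonoidalPreadditive.add_whiskerRight f g

/-- The functor `X ↦ H_i(X ⊗ P)`. For `P` a projective resolution of `N` its values are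
`Tor_i(X, N)`, and functoriality in `X` gives the long exact sequence in the first variable. -/
noncomputable def tensH (P : ChainComplex (ModuleCat.{u} R) ℕ) (i : ℕ) :
    ModuleCat.{u} R ⥤ ModuleCat.{u} R :=
  tensC P ⋙ HomologicalComplex.homologyFunctor _ _ i

instance (P : ChainComplex (ModuleCat.{u} R) ℕ) (i : ℕ) : (tensH P i).Additive := by
  unfold tensH; infer_instance

lemma tensC_shortExact {N : ModuleCat.{u} R} (P : ProjectiveResolution N)
    (S : ShortComplex (ModuleCat.{u} R)) (hS : S.ShortExact) :
    (S.map (tensC P.complex)).ShortExact := by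
  apply HomologicalComplex.shortExact_of_degreewise_shortExact
  intro i
  have : Module.Projective R (P.complex.X i) :=
    (IsProjective.iff_projective _).2 (P.projective i)
  exact hS.map_of_exact (tensorRight (P.complex.X i))

lemma tensH_isZero {N : ModuleCat.{u} R} (P : ProjectiveResolution N)
    (F : ModuleCat.{u} R) [Module.Flat R F] (i : ℕ) :
    Limits.IsZero ((tensH P.complex (i + 1)).obj F) := by
  have h := Module.Flat.lTensor_shortComplex_exact F _ (P.complex_exactAt_succ i)
  have h2 : ((tensC P.complex).obj F).ExactAt (i + 1) := by
    rw [HomologicalComplex.exactAt_iff]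
    exact h
  exact h2.isZero_homology

/-- `Tor_i(X, N) ≅ H_i(X ⊗ P)` for a projective resolution `P` of `N`. -/
noncomputable def torIso {N : ModuleCat.{u} R} (P : ProjectiveResolution N)
    (X : ModuleCat.{u} R) (i : ℕ) :
    ((Tor (ModuleCat.{u} R) i).obj X).obj N ≅ (tensH P.complex i).obj X :=
  P.isoLeftDerivedObj _ i

/-- Additivity: `H_i(X^n ⊗ P) ≅ H_i(X ⊗ P)^n`. -/
noncomputable def tensHPi (P : ChainComplex (ModuleCat.{u} R) ℕ) (i n : ℕ) (X : Type u)
    [AddCommGroup X] [Module R X] :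
    ((tensH P i).obj (ModuleCat.of R (Fin n → X))) ≃ₗ[R]
      (Fin n → (tensH P i).obj (ModuleCat.of R X)) :=
  (((tensH P i).mapIso (ModuleCat.biproductIsoPi (fun _ : Fin n => ModuleCat.of R X)).symm ≪≫
    (tensH P i).mapBiproduct (fun _ : Fin n => ModuleCat.of R X) ≪≫
    ModuleCat.biproductIsoPi (fun _ : Fin n => (tensH P i).obj (ModuleCat.of R X)))).toLinearEquiv

/-- `H_i(X ⊗ P)` is a subquotient of `X ⊗ P_i`, so every scalar killing `X` kills it. -/
lemma tensH_smul_eq_zero (P : ChainComplex (ModuleCat.{u} R) ℕ) (i : ℕ) (X : ModuleCat.{u} R)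
    (r : R) (h : ∀ y : X, r • y = 0) (z : (tensH P i).obj X) : r • z = 0 := by
  let K := (tensC P).obj X
  have hK : ∀ y : K.X i, r • y = 0 := by
    intro y
    change (r • (show TensorProduct R X (P.X i) from y) : TensorProduct R X (P.X i)) = 0
    generalize (show TensorProduct R X (P.X i) from y) = w
    induction w using TensorProduct.induction_on with
    | zero => simp
    | tmul a b => rw [TensorProduct.smul_tmul', h, TensorProduct.zero_tmul]
    | add a b ha hb => rw [smul_add, ha, hb, add_zero]
  obtain ⟨c, rfl⟩ := (ModuleCat.epi_iff_surjective (K.homologyπ i)).1 inferInstance z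
  have h0 : r • c = 0 := by
    apply (ModuleCat.mono_iff_injective (K.iCycles i)).1 inferInstance
    rw [map_smul, hK, map_zero]
  have h1 := map_smul (K.homologyπ i).hom r c
  rw [h0, map_zero] at h1
  exact h1.symm

end TensorHomology

/-! ### The recursion for Betti numbers -/

section Betti
variable {R : Type u} [CommRing R]

section LES
variable {A B C : Type u} [AddCommGroup A] [AddCommGroup B] [AddCommGroup C]
  [Module R A] [Module R B] [Module R C] {f : A →ₗ[R] B} {g : B →ₗ[R] C}

lemma shortExact_of (hf : Function.Injective f) (hfg : Function.Exact f g)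
    (hg : Function.Surjective g) :
    (ShortComplex.mk (ModuleCat.ofHom f) (ModuleCat.ofHom g)
      (ModuleCat.hom_ext hfg.linearMap_comp_eq_zero)).ShortExact :=
  ModuleCat.shortComplex_shortExact _ hfg hf hg

variable {N : ModuleCat.{u} R} (P : ProjectiveResolution N)

lemma exists_injective_connecting (hf : Function.Injective f) (hfg : Function.Exact f g)
    (hg : Function.Surjective g) (i : ℕ)
    (h : Subsingleton ((tensH P.complex (i + 1)).obj (ModuleCat.of R B))) :
    ∃ d : (tensH P.complex (i + 1)).obj (ModuleCat.of R C) →ₗ[R]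
      (tensH P.complex i).obj (ModuleCat.of R A), Function.Injective d := by
  have hS := tensC_shortExact P _ (shortExact_of hf hfg hg)
  have := hS.mono_δ (i + 1) i (by simp) (ModuleCat.isZero_of_iff_subsingleton.2 h)
  exact ⟨(hS.δ (i + 1) i (by simp)).hom, (ModuleCat.mono_iff_injective _).1 this⟩

lemma nonempty_equiv_connecting (hf : Function.Injective f) (hfg : Function.Exact f g)
    (hg : Function.Surjective g) (i : ℕ)
    (h : Subsingleton ((tensH P.complex (i + 1)).obj (ModuleCat.of R B)))
    (h' : Subsingleton ((tensH P.complex i).obj (ModuleCat.of R B))) :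
    Nonempty ((tensH P.complex (i + 1)).obj (ModuleCat.of R C) ≃ₗ[R]
      (tensH P.complex i).obj (ModuleCat.of R A)) := by
  have hS := tensC_shortExact P _ (shortExact_of hf hfg hg)
  exact ⟨(hS.δIso (i + 1) i (by simp) (ModuleCat.isZero_of_iff_subsingleton.2 h)
    (ModuleCat.isZero_of_iff_subsingleton.2 h')).toLinearEquiv⟩

end LES

/-- The isomorphism `H_i(X ⊗ P) ≅ H_i(Y ⊗ P)` induced by `X ≅ Y`. -/
noncomputable def tensHCongr (P : ChainComplex (ModuleCat.{u} R) ℕ) (i : ℕ) {X Y : Type u}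
    [AddCommGroup X] [Module R X] [AddCommGroup Y] [Module R Y] (e : X ≃ₗ[R] Y) :
    (tensH P i).obj (ModuleCat.of R X) ≃ₗ[R] (tensH P i).obj (ModuleCat.of R Y) :=
  ((tensH P i).mapIso e.toModuleIso).toLinearEquiv

/-- `Tor_i(X, N)` is finitely generated, by dimension shifting in `X`: the connecting map embeds
`Tor_(i+1)(X, N)` into `Tor_i(K, N)` for a first syzygy `K` of `X`. -/
lemma tensH_finite [IsNoetherianRing R] {N : Type u} [AddCommGroup N] [Module R N]
    [Module.Finite R N] (P : ProjectiveResolution (ModuleCat.of R N)) (i : ℕ) :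
    ∀ (X : Type u) [AddCommGroup X] [Module R X] [Module.Finite R X],
      Module.Finite R ((tensH P.complex i).obj (ModuleCat.of R X)) := by
  induction i with
  | zero =>
    intro X _ _ _
    have : Limits.PreservesFiniteColimits
        ((MonoidalCategory.tensoringLeft (ModuleCat.{u} R)).obj (ModuleCat.of R X)) :=
      inferInstanceAs (Limits.PreservesFiniteColimits
        (MonoidalCategory.tensorLeft (ModuleCat.of R X)))
    have e := (torIso P (ModuleCat.of R X) 0).symm ≪≫
      (Functor.leftDerivedZeroIsoSelf
        ((MonoidalCategory.tensoringLeft (ModuleCat.{u} R)).obj (ModuleCat.of R X))).app _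
    have : Module.Finite R (((MonoidalCategory.tensoringLeft (ModuleCat.{u} R)).obj
        (ModuleCat.of R X)).obj (ModuleCat.of R N)) :=
      inferInstanceAs (Module.Finite R (TensorProduct R X N))
    exact Module.Finite.equiv e.toLinearEquiv.symm
  | succ i ih =>
    intro X _ _ _
    obtain ⟨n, f, hf⟩ := Module.Finite.exists_fin' R X
    have := ih (LinearMap.ker f)
    obtain ⟨d, hd⟩ := exists_injective_connecting P (f := (LinearMap.ker f).subtype) (g := f)
      (LinearMap.ker f).injective_subtype (LinearMap.exact_subtype_ker_map f) hf i
      (ModuleCat.subsingleton_of_isZero (tensH_isZero P (ModuleCat.of R (Fin n → R)) i))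
    exact Module.Finite.of_injective d hd

variable [IsLocalRing R]

/-- If `m` kills `X`, then `X ≅ k^n` with `n = ℓ(X)`, so `ℓ(Tor_i(X, N)) = ℓ(X) ℓ(Tor_i(k, N))`. -/
lemma length_tensH_of_killed (P : ChainComplex (ModuleCat.{u} R) ℕ) (i : ℕ) {X : Type u}
    [AddCommGroup X] [Module R X] [Module.Finite R X]
    (h : ∀ r ∈ maximalIdeal R, ∀ y : X, r • y = 0) :
    Module.length R ((tensH P i).obj (ModuleCat.of R X)) = Module.length R X *
      Module.length R ((tensH P i).obj (ModuleCat.of R (ResidueField R))) := by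
  obtain ⟨n, ⟨e⟩⟩ := exists_equiv_pi_residueField h
  rw [(tensHCongr P i e).length_eq, (tensHPi P i n (ResidueField R)).length_eq, e.length_eq,
    Module.length_pi, Module.length_pi, length_residueField, mul_one]

/-- `μ(M) β_(i+2)(N) = ℓ(mM/xM) β_(i+1)(N)` once `Tor_j(M, N) = 0` for `j = i, i+1, i+2`.
The sequence `0 → xM → M → M/xM → 0` with `xM ≅ M` kills `Tor_j(M/xM, N)` for `j = i+1, i+2`;
then the connecting map of `0 → mM/xM → M/xM → M/mM → 0` is an isomorphism, and both outer
modules are vector spaces over `k`. -/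
lemma betti_recursion [IsNoetherianRing R] {M : Type u} [AddCommGroup M] [Module R M]
    [Module.Finite R M]
    {N : ModuleCat.{u} R} (P : ProjectiveResolution N)
    {x : R} (hx : ∀ y : M, x • y = 0 → y = 0) (hxm : x ∈ maximalIdeal R)
    (hmm : (maximalIdeal R) ^ 2 • (⊤ : Submodule R M) =
        Ideal.span {x} • (maximalIdeal R • (⊤ : Submodule R M))) (i : ℕ)
    (h0 : Subsingleton ((tensH P.complex i).obj (ModuleCat.of R M)))
    (h1 : Subsingleton ((tensH P.complex (i + 1)).obj (ModuleCat.of R M)))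
    (h2 : Subsingleton ((tensH P.complex (i + 2)).obj (ModuleCat.of R M))) :
    mu R M * Module.length R
        ((tensH P.complex (i + 2)).obj (ModuleCat.of R (ResidueField R))) =
      Module.length R ((maximalIdeal R • (⊤ : Submodule R M) : Submodule R M) ⧸
        (Ideal.span {x} • (⊤ : Submodule R M)).comap
          (maximalIdeal R • (⊤ : Submodule R M)).subtype) *
        Module.length R ((tensH P.complex (i + 1)).obj (ModuleCat.of R (ResidueField R))) := by
  set Q : Submodule R M := Ideal.span {x} • (⊤ : Submodule R M) with hQ
  set L : Submodule R M := maximalIdeal R • (⊤ : Submodule R M) with hL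
  have hle : Q ≤ L := Submodule.smul_mono_left ((Ideal.span_singleton_le_iff_mem _).2 hxm)
  obtain ⟨e⟩ := exists_equiv_span_smul hx (⊤ : Submodule R M)
  have hQ0 : ∀ j, Subsingleton ((tensH P.complex j).obj (ModuleCat.of R M)) →
      Subsingleton ((tensH P.complex j).obj (ModuleCat.of R Q)) := fun j hj =>
    (tensHCongr P.complex j (Submodule.topEquiv.symm.trans e)).symm.toEquiv.subsingleton
  have hMQ : ∀ j, Subsingleton ((tensH P.complex j).obj (ModuleCat.of R M)) →
      Subsingleton ((tensH P.complex (j + 1)).obj (ModuleCat.of R M)) →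
      Subsingleton ((tensH P.complex (j + 1)).obj (ModuleCat.of R (M ⧸ Q))) := by
    intro j hj hj1
    obtain ⟨d, hd⟩ := exists_injective_connecting P Q.injective_subtype
      (LinearMap.exact_subtype_mkQ Q) Q.mkQ_surjective j hj1
    have := hQ0 j hj
    exact hd.subsingleton
  obtain ⟨d⟩ := nonempty_equiv_connecting P (quotIncl_injective L Q) (quotIncl_exact hle)
    (Submodule.factor_surjective hle) (i + 1) (hMQ _ h1 h2) (hMQ _ h0 h1)
  rw [mu_eq_length, ← length_tensH_of_killed, ← length_tensH_of_killed, d.length_eq]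
  · rintro r hr y
    obtain ⟨⟨y, hy⟩, rfl⟩ := Submodule.Quotient.mk_surjective _ y
    refine (Submodule.Quotient.mk_eq_zero _).2 (?_ : r • y ∈ Q)
    have h3 : r • y ∈ maximalIdeal R • L := Submodule.smul_mem_smul hr hy
    rw [hL, ← mul_smul, ← sq, hmm] at h3
    exact Submodule.smul_mono le_rfl le_top h3
  · rintro r hr y
    obtain ⟨y, rfl⟩ := Submodule.Quotient.mk_surjective _ y
    exact (Submodule.Quotient.mk_eq_zero _).2 (Submodule.smul_mem_smul hr trivial)

end Betti

/-- if `M` is a nonzero f.g. torsion-free module of minimal multiplicity with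
`e_R(M) > 2μ_R(M)`, and `N` is f.g. with `Tor_i^R(M,N) = 0` for all `i ≫ 0`, then either `N`
has finite projective dimension (`Tor_i^R(k,N) = 0` for `i ≫ 0`) or the Betti numbers of `N`
satisfy `β_{i+1}(N) > β_i(N)` for all `i ≫ 0`. -/
theorem stmt19 (R : Type u) [CommRing R] [IsLocalRing R] [IsNoetherianRing R]
    [Infinite (ResidueField R)]
    (hdim : ringKrullDim R = 1)
    (hCM : ∃ r ∈ maximalIdeal R, r ∈ nonZeroDivisors R)
    (M : Type u) [AddCommGroup M] [Module R M] [Module.Finite R M] [Nontrivial M]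
    (hTF : TorsionFree R M)
    (hmm : ∃ x : R, IsMinimalReduction R (maximalIdeal R) x ∧
      (maximalIdeal R) ^ 2 • (⊤ : Submodule R M) =
        Ideal.span {x} • (maximalIdeal R • (⊤ : Submodule R M)))
    (hbig : hsMult R (maximalIdeal R) M > ((2 * mu R M : ℕ) : ℕ∞))
    (N : Type u) [AddCommGroup N] [Module R N] [Module.Finite R N]
    (hvanish : ∃ n : ℕ, ∀ i ≥ n,
      Subsingleton (((Tor (ModuleCat.{u} R) i).obj (ModuleCat.of R M)).obj
        (ModuleCat.of R N))) :
    (∃ n : ℕ, ∀ i ≥ n,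
        Subsingleton (((Tor (ModuleCat.{u} R) i).obj
          (ModuleCat.of R (ResidueField R))).obj (ModuleCat.of R N))) ∨
      (∃ n : ℕ, ∀ i ≥ n,
        mu R (((Tor (ModuleCat.{u} R) (i + 1)).obj
            (ModuleCat.of R (ResidueField R))).obj (ModuleCat.of R N)) >
          mu R (((Tor (ModuleCat.{u} R) i).obj
            (ModuleCat.of R (ResidueField R))).obj (ModuleCat.of R N))) := by
  obtain ⟨x, hred, hmm⟩ := hmm
  have hx : ∀ y : M, x • y = 0 → y = 0 := hTF x (mem_nonZeroDivisors_of_reduction hred hCM)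
  obtain ⟨P⟩ : Nonempty (ProjectiveResolution (ModuleCat.of R N)) :=
    ⟨projectiveResolution (ModuleCat.of R N)⟩
  -- `T i` is `Tor_i(k, N)`, a finitely generated module killed by the maximal ideal.
  let T : ℕ → ModuleCat.{u} R := fun i =>
    ((Tor (ModuleCat.{u} R) i).obj (ModuleCat.of R (ResidueField R))).obj (ModuleCat.of R N)
  have e : ∀ i, T i ≃ₗ[R] (tensH P.complex i).obj (ModuleCat.of R (ResidueField R)) := fun i =>
    (torIso P (ModuleCat.of R (ResidueField R)) i).toLinearEquiv
  have hfin : ∀ i, Module.Finite R (T i) := fun i =>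
    have := tensH_finite P i (ResidueField R)
    Module.Finite.equiv (e i).symm
  have hkill : ∀ i, ∀ r ∈ maximalIdeal R, ∀ y : T i, r • y = 0 := by
    intro i r hr y
    apply (e i).injective
    rw [map_smul, map_zero]
    refine tensH_smul_eq_zero _ _ _ r (fun z => ?_) _
    obtain ⟨z, rfl⟩ := residue_surjective z
    change r • residue R z = 0
    rw [Algebra.smul_def, ResidueField.algebraMap_eq, (residue_eq_zero_iff r).2 hr, zero_mul]
  have hmu : ∀ i, (mu R (T i) : ℕ∞) = Module.length R (T i) := fun i =>
    have := hfin i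
    mu_eq_length_of_killed (hkill i)
  have he := mu_maximalIdeal_smul_eq hx hred.1 hmm
  generalize ha : Module.length R ((maximalIdeal R • (⊤ : Submodule R M) : Submodule R M) ⧸
    (Ideal.span {x} • (⊤ : Submodule R M)).comap
      (maximalIdeal R • (⊤ : Submodule R M)).subtype) = a at he
  have ha' : a ≠ ⊤ := fun h => by
    rw [h, top_add] at he
    exact ENat.natCast_ne_top _ he
  lift a to ℕ using ha'
  rw [hsMult_eq hx hmm, he] at hbig
  have hlt : mu R M < a := by
    have : 2 * mu R M < a + mu R M := by exact_mod_cast hbig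
    omega
  have hpos : 0 < mu R M := by
    rw [Nat.pos_iff_ne_zero, mu_eq_spanFinrank, ne_eq,
      Submodule.spanFinrank_eq_zero_iff_eq_bot Module.Finite.fg_top]
    exact top_ne_bot
  obtain ⟨n, hn⟩ := hvanish
  have hn' : ∀ i ≥ n, Subsingleton ((tensH P.complex i).obj (ModuleCat.of R M)) := fun i hi =>
    have := hn i hi
    (torIso P (ModuleCat.of R M) i).symm.toLinearEquiv.toEquiv.subsingleton
  have hrec : ∀ i ≥ n, mu R M * mu R (T (i + 2)) = a * mu R (T (i + 1)) := by
    intro i hi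
    have h := betti_recursion P hx hred.1 hmm i (hn' _ hi) (hn' _ (by omega)) (hn' _ (by omega))
    rw [ha, ← (e _).length_eq, ← (e _).length_eq, ← hmu, ← hmu] at h
    exact_mod_cast h
  -- Since `μ(M) > 0`, one vanishing Betti number in this range forces all later ones to vanish.
  by_cases hz : ∃ i ≥ n, mu R (T (i + 1)) = 0
  · left
    obtain ⟨i, hi, hz⟩ := hz
    refine ⟨i + 1, fun j hj => ?_⟩
    have h0 : mu R (T j) = 0 := by
      induction j, hj using Nat.le_induction with
      | base => exact hz
      | succ j hj ih =>
        obtain ⟨j, rfl⟩ := Nat.exists_eq_add_of_le' (show 1 ≤ j by omega)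
        have h := hrec j (by omega)
        rw [ih, mul_zero] at h
        exact (Nat.mul_eq_zero.1 h).resolve_left hpos.ne'
    have h1 := hmu j
    rw [h0, Nat.cast_zero] at h1
    exact Module.length_eq_zero_iff.1 h1.symm
  · right
    push Not at hz
    refine ⟨n + 1, fun i hi => ?_⟩
    obtain ⟨i, rfl⟩ := Nat.exists_eq_add_of_le' (show 1 ≤ i by omega)
    have h := hrec i (by omega)
    have h0 := Nat.pos_of_ne_zero (hz i (by omega))
    change mu R (T (i + 1)) < mu R (T (i + 1 + 1))
    by_contra hcon
    have h3 : mu R M * mu R (T (i + 2)) ≤ mu R M * mu R (T (i + 1)) :=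
      Nat.mul_le_mul_left _ (not_lt.1 hcon)
    rw [h] at h3
    exact absurd (Nat.le_of_mul_le_mul_right h3 h0) (not_le.2 hlt)
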